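/- The series ∑_{n=1}^∞ ζ(2n+1)/((2n+1)(n+1)·4^n) equals -12·log A + 2 - γ + (7/3)·log 2, where A is the Glaisher-Kinkelin constant and γ is the Euler-Mascheroni constant. -/

import Mathlib

open Real
/-- second difference remainder bound -/
lemma aux_pow (s : ℂ) (t : ℝ) (ht : -1 < t) : HasDerivAt (fun t : ℝ => (1 + (t:ℂ)) ^ s) (s * (1 + (t:ℂ)) ^ (s - 1)) t := by
  have h1 : HasDerivAt (fun z : ℂ => (1 + z) ^ s) (s * (1 + (t:ℂ)) ^ (s - 1) * 1) (t:ℂ) := by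
    apply HasDerivAt.cpow_const
    · simpa using (hasDerivAt_id (t:ℂ)).const_add 1
    · left; simp; linarith
  simpa using h1.comp_ofReal

lemma aux_pow' (s : ℂ) (t : ℝ) (ht : t < 1) : HasDerivAt (fun t : ℝ => (1 - (t:ℂ)) ^ s) (-(s * (1 - (t:ℂ)) ^ (s - 1))) t := by
  have h1 : HasDerivAt (fun z : ℂ => (1 - z) ^ s) (s * (1 - (t:ℂ)) ^ (s - 1) * (-1)) (t:ℂ) := by
    apply HasDerivAt.cpow_const
    · simpa using (hasDerivAt_id (t:ℂ)).const_sub 1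
    · left; simp; linarith
  simpa using h1.comp_ofReal

lemma aux_mvt (f f' : ℝ → ℂ) (C : ℝ) (n : ℕ) (h0 : f 0 = 0)
    (hf : ∀ t ∈ Set.Icc (0:ℝ) (1/2), HasDerivAt f (f' t) t)
    (hb : ∀ t ∈ Set.Icc (0:ℝ) (1/2), ‖f' t‖ ≤ C * t ^ n) (hC : 0 ≤ C) :
    ∀ t ∈ Set.Icc (0:ℝ) (1/2), ‖f t‖ ≤ C * t ^ (n + 1) := by
  intro t ht
  have h1 : ‖f t‖ ≤ C / (n+1) * t ^ (n + 1) := by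
    refine image_norm_le_of_norm_deriv_right_le_deriv_boundary (f := f) (f' := f') (a := 0) (b := 1/2)
      (B := fun t => C / (n+1) * t ^ (n + 1)) (B' := fun t => C * t ^ n) ?_ ?_ ?_ ?_ ?_ ht
    · intro x hx; exact (hf x hx).continuousAt.continuousWithinAt
    · intro x hx; exact (hf x ⟨hx.1, hx.2.le⟩).hasDerivWithinAt
    · simp [h0]
    · intro x
      have := (hasDerivAt_pow (n+1) x).const_mul (C / (n+1))
      refine this.congr_deriv ?_
      have h3 : (n:ℝ) + 1 ≠ 0 := by positivity
      rw [← mul_assoc]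
      push_cast
      rw [div_mul_cancel₀ _ h3]
    · intro x hx; exact hb x ⟨hx.1, hx.2.le⟩
  refine h1.trans ?_
  have := ht.1
  gcongr
  apply div_le_self hC
  simp

lemma aux_bd (x : ℝ) (hx : 1/2 ≤ x) (hx2 : x ≤ 3/2) (s : ℂ) (R : ℝ) (hR : ‖s‖ ≤ R) :
    ‖(x:ℂ) ^ s‖ ≤ 2 ^ R := by
  rw [Complex.norm_cpow_eq_rpow_re_of_pos (by linarith)]
  have hs := (Complex.abs_re_le_norm s).trans hR
  rcases abs_le.1 hs with ⟨h1, h2⟩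
  rcases le_total 0 s.re with h | h
  · calc x ^ s.re ≤ 2 ^ s.re := by apply Real.rpow_le_rpow <;> linarith
      _ ≤ 2 ^ R := by apply Real.rpow_le_rpow_of_exponent_le <;> linarith
  · calc x ^ s.re ≤ (1/2) ^ s.re := by apply Real.rpow_le_rpow_of_nonpos <;> linarith
      _ = 2 ^ (-s.re) := by rw [one_div, Real.inv_rpow (by norm_num), Real.rpow_neg (by norm_num)]
      _ ≤ 2 ^ R := by apply Real.rpow_le_rpow_of_exponent_le <;> linarith

lemma aux_g (s : ℂ) (hs : ‖s‖ ≤ 6) : ∀ t ∈ Set.Icc (0:ℝ) (1/2),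
    ‖(1 + (t:ℂ)) ^ (-s) + (1 - (t:ℂ)) ^ (-s) - 2 - s * (s + 1) * t ^ 2‖ ≤ (6 * 7 * 8 * 2 * 2 ^ (9:ℝ)) * t ^ 3 := by
  have hC : (0:ℝ) ≤ (6 * 7 * 8 * 2 * 2 ^ (9:ℝ)) := by positivity
  refine aux_mvt _ (fun t => (-s) * (1 + (t:ℂ)) ^ (-s-1) + -((-s) * (1 - (t:ℂ)) ^ (-s-1)) - s * (s + 1) * (2 * t)) _ 2 (by norm_num) ?_ ?_ hC
  · intro t ht
    have h2 : HasDerivAt (fun t : ℝ => s * (s + 1) * (t:ℂ)^2) (s * (s + 1) * (2 * (t:ℂ))) t := by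
      have := ((hasDerivAt_pow 2 (t:ℂ)).comp_ofReal).const_mul (s * (s+1))
      simpa using this
    exact (((aux_pow (-s) t (by linarith [ht.1])).add (aux_pow' (-s) t (by linarith [ht.2]))).sub_const 2).sub h2
  refine aux_mvt _ (fun t => (-s) * ((-s-1) * (1 + (t:ℂ)) ^ (-s-1-1)) + -((-s) * -((-s-1) * (1 - (t:ℂ)) ^ (-s-1-1))) - s * (s + 1) * 2) _ 1 (by norm_num) ?_ ?_ hC
  · intro t ht
    have h2 : HasDerivAt (fun t : ℝ => s * (s + 1) * (2 * (t:ℂ))) (s * (s + 1) * 2) t := by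
      have := (((hasDerivAt_id (t:ℂ)).comp_ofReal).const_mul 2).const_mul (s * (s+1))
      simpa using this
    exact (((aux_pow (-s-1) t (by linarith [ht.1])).const_mul (-s)).add ((aux_pow' (-s-1) t (by linarith [ht.2])).const_mul (-s)).neg).sub h2
  refine aux_mvt _ (fun t => (-s) * ((-s-1) * ((-s-1-1) * (1 + (t:ℂ)) ^ (-s-1-1-1))) + -((-s) * -((-s-1) * -((-s-1-1) * (1 - (t:ℂ)) ^ (-s-1-1-1))))) _ 0 (by norm_num; ring) ?_ ?_ hC
  · intro t ht
    exact ((((aux_pow (-s-1-1) t (by linarith [ht.1])).const_mul (-s-1)).const_mul (-s)).add ((((aux_pow' (-s-1-1) t (by linarith [ht.2])).const_mul (-s-1)).neg).const_mul (-s)).neg).sub_const _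
  · intro t ht
    have n1 : ‖-s‖ ≤ 6 := by simpa using hs
    have n2 : ‖-s-1‖ ≤ 7 := (norm_sub_le _ _).trans (by norm_num at *; linarith)
    have n3 : ‖-s-1-1‖ ≤ 8 := (norm_sub_le _ _).trans (by norm_num at *; linarith)
    have n4 : ‖-s-1-1-1‖ ≤ 9 := (norm_sub_le _ _).trans (by norm_num at *; linarith)
    have b1 := aux_bd (1 + t) (by linarith [ht.1]) (by linarith [ht.2]) _ _ n4
    have b2 := aux_bd (1 - t) (by linarith [ht.2]) (by linarith [ht.1]) _ _ n4
    push_cast at b1 b2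
    refine (norm_add_le _ _).trans ?_
    simp only [norm_neg, norm_mul] at *
    have e : (6 * 7 * 8 * 2 * 2 ^ (9:ℝ)) * t ^ 0 = 6 * (7 * (8 * 2 ^ (9:ℝ))) + 6 * (7 * (8 * 2 ^ (9:ℝ))) := by ring
    rw [e]
    gcongr

noncomputable def FF (k : ℕ) (s : ℂ) : ℂ :=
  2 * (2 * (k:ℂ) + 3) ^ (-s) + 2 * (2 * (k:ℂ) + 1) ^ (-s) - 4 * (2 * (k:ℂ) + 2) ^ (-s)
    - 2 * s * (s + 1) * (2 * (k:ℂ) + 2) ^ (-s - 2)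

lemma FF_bound (k : ℕ) (s : ℂ) (hs : s ∈ Metric.ball (2:ℂ) (7/2)) :
    ‖FF k s‖ ≤ 2 * (6 * 7 * 8 * 2 * 2 ^ (9:ℝ)) * (1 / ((k:ℝ) + 1) ^ (3/2:ℝ)) := by
  rw [Metric.mem_ball, dist_eq_norm] at hs
  have hn : ‖s‖ ≤ 6 := by
    have := norm_add_le (s - 2) 2
    norm_num at this; linarith
  have hre : -(3/2) < s.re := by
    have := (abs_le.1 ((Complex.abs_re_le_norm (s - 2)).trans hs.le)).1
    have := (Complex.abs_re_le_norm (s - 2)).trans_lt hs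
    rw [abs_lt] at this
    simp at this; linarith
  have hm : (0:ℝ) < 2 * k + 2 := by positivity
  have hm0 : (2 * (k:ℂ) + 2) ≠ 0 := by exact_mod_cast hm.ne'
  set t : ℝ := 1 / (2 * k + 2) with ht
  have ht0 : 0 ≤ t := by positivity
  have ht1 : t ≤ 1/2 := by
    rw [ht]; apply one_div_le_one_div_of_le <;> norm_num
  have key : FF k s = 2 * (2 * (k:ℂ) + 2) ^ (-s) * ((1 + (t:ℂ)) ^ (-s) + (1 - (t:ℂ)) ^ (-s) - 2 - s * (s + 1) * t ^ 2) := by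
    have e1 : (2 * (k:ℂ) + 3) ^ (-s) = (2 * (k:ℂ) + 2) ^ (-s) * (1 + (t:ℂ)) ^ (-s) := by
      have := Complex.mul_cpow_ofReal_nonneg (a := 2 * k + 2) (b := 1 + t) (by linarith) (by linarith) (-s)
      push_cast at this
      rw [← this]; congr 1
      rw [ht]; push_cast; field_simp; ring
    have e2 : (2 * (k:ℂ) + 1) ^ (-s) = (2 * (k:ℂ) + 2) ^ (-s) * (1 - (t:ℂ)) ^ (-s) := by
      have := Complex.mul_cpow_ofReal_nonneg (a := 2 * k + 2) (b := 1 - t) (by linarith) (by linarith) (-s)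
      push_cast at this
      rw [← this]; congr 1
      rw [ht]; push_cast; field_simp; ring
    have e3 : (2 * (k:ℂ) + 2) ^ (-s - 2) = (2 * (k:ℂ) + 2) ^ (-s) * (t:ℂ) ^ 2 := by
      rw [Complex.cpow_sub _ _ hm0, ht]
      push_cast
      rw [show ((2 * (k:ℂ) + 2) ^ (2:ℂ)) = (2 * (k:ℂ) + 2) ^ 2 from Complex.cpow_ofNat _ 2]
      field_simp
    rw [FF, e1, e2, e3]; ring
  rw [key, norm_mul, norm_mul]
  have hg := aux_g s hn t ⟨ht0, ht1⟩
  have hp : ‖(2 * (k:ℂ) + 2) ^ (-s)‖ = (2 * (k:ℝ) + 2) ^ (-s.re) := by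
    have := Complex.norm_cpow_eq_rpow_re_of_pos hm (-s)
    push_cast at this
    simpa using this
  rw [hp]
  have h3 : (2 * (k:ℝ) + 2) ^ (-s.re) * t ^ 3 ≤ 1 / ((k:ℝ) + 1) ^ (3/2:ℝ) := by
    have : t ^ 3 = (2 * (k:ℝ) + 2) ^ (-3:ℝ) := by
      rw [Real.rpow_neg hm.le, ht]
      rw [show ((2 * (k:ℝ) + 2) ^ (3:ℝ)) = (2 * (k:ℝ) + 2) ^ 3 from Real.rpow_ofNat _ 3]
      simp
    rw [this, ← Real.rpow_add hm, one_div, ← Real.rpow_neg (by positivity)]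
    calc _ ≤ (2 * (k:ℝ) + 2) ^ (-(3/2):ℝ) := by
          apply Real.rpow_le_rpow_of_exponent_le <;> linarith
      _ ≤ _ := by
          apply Real.rpow_le_rpow_of_nonpos <;> [positivity; linarith; norm_num]
  calc _ ≤ ‖(2:ℂ)‖ * (2 * (k:ℝ) + 2) ^ (-s.re) * ((6 * 7 * 8 * 2 * 2 ^ (9:ℝ)) * t ^ 3) := by gcongr
    _ = 2 * (6 * 7 * 8 * 2 * 2 ^ (9:ℝ)) * ((2 * (k:ℝ) + 2) ^ (-s.re) * t ^ 3) := by simp; ring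
    _ ≤ _ := by gcongr

lemma hasSum_conv {E : Type*} [AddCommMonoid E] [TopologicalSpace E] {f g : ℕ → E} {a b : E} (h : HasSum f a) (hf : ∀ k, g k = f k) (hab : b = a) : HasSum g b := by
  subst hab; rwa [funext hf]

lemma FF_diff (k : ℕ) : Differentiable ℂ (FF k) := by
  have h1 : (2 * (k:ℂ) + 1) ≠ 0 := by exact_mod_cast (by omega : 2 * k + 1 ≠ 0)
  have h2 : (2 * (k:ℂ) + 2) ≠ 0 := by exact_mod_cast (by omega : 2 * k + 2 ≠ 0)
  have h3 : (2 * (k:ℂ) + 3) ≠ 0 := by exact_mod_cast (by omega : 2 * k + 3 ≠ 0)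
  have e (c : ℂ) (hc : c ≠ 0) (f : ℂ → ℂ) (hf : Differentiable ℂ f) : Differentiable ℂ (fun s => c ^ (f s)) :=
    fun s => (hf s).const_cpow (Or.inl hc)
  have e1 := e _ h1 (fun s => -s) (by fun_prop)
  have e2 := e _ h2 (fun s => -s) (by fun_prop)
  have e3 := e _ h3 (fun s => -s) (by fun_prop)
  have e4 := e _ h2 (fun s => -s - 2) (by fun_prop)
  unfold FF
  fun_prop

lemma FF_sum (s : ℂ) (hs : 1 < s.re) :
    HasSum (fun k => FF k s) (4 * (1 - 2 ^ (1 - s)) * riemannZeta s - 2 - 2 * s * (s + 1) * (2 ^ (-s - 2) * riemannZeta (s + 2))) := by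
  have ev (s : ℂ) (hs : 1 < s.re) : HasSum (fun k : ℕ => (2 * (k:ℂ) + 2) ^ (-s)) (2 ^ (-s) * riemannZeta s) ∧
      HasSum (fun k : ℕ => (2 * (k:ℂ) + 1) ^ (-s)) (riemannZeta s - 2 ^ (-s) * riemannZeta s) := by
    have hsm : Summable (fun n : ℕ => ((n:ℂ) + 1) ^ (-s)) := by
      have := (summable_nat_add_iff 1).2 (Complex.summable_one_div_nat_cpow.2 hs)
      simpa [Complex.cpow_neg] using this
    have hz : HasSum (fun n : ℕ => ((n:ℂ) + 1) ^ (-s)) (riemannZeta s) := by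
      rw [zeta_eq_tsum_one_div_nat_add_one_cpow hs]
      simpa [Complex.cpow_neg] using hsm.hasSum
    have h2 : HasSum (fun k : ℕ => (2 * (k:ℂ) + 2) ^ (-s)) (2 ^ (-s) * riemannZeta s) := by
      refine (hz.mul_left (2 ^ (-s))).congr_fun ?_
      intro k
      have := Complex.mul_cpow_ofReal_nonneg (a := 2) (b := k + 1) (by norm_num) (by positivity) (-s)
      push_cast at this
      rw [← this]; congr 1; ring
    refine ⟨h2, ?_⟩
    have hodd : Summable (fun k : ℕ => (2 * (k:ℂ) + 1) ^ (-s)) := by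
      have := hsm.comp_injective (i := fun k : ℕ => 2 * k) (fun a b h => by simpa using h)
      simpa [Function.comp_def] using this
    have := HasSum.even_add_odd (f := fun n : ℕ => ((n:ℂ) + 1) ^ (-s)) (by simpa using hodd.hasSum)
      (by refine h2.congr_fun ?_; intro k; push_cast; congr 1; ring)
    have h4 := this.unique hz
    have := hodd.hasSum
    rwa [eq_sub_of_add_eq h4] at this
  obtain ⟨h2, h1⟩ := ev s hs
  obtain ⟨h2', -⟩ := ev (s + 2) (by simp; linarith)
  have h3 : HasSum (fun k : ℕ => (2 * (k:ℂ) + 3) ^ (-s)) (riemannZeta s - 2 ^ (-s) * riemannZeta s - 1) := by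
    have := (hasSum_nat_add_iff' 1).2 h1
    simp only [Finset.range_one, Finset.sum_singleton, Nat.cast_zero, mul_zero, zero_add, Complex.one_cpow] at this
    refine this.congr_fun ?_
    intro k
    push_cast; congr 1; ring
  have := (((h3.mul_left 2).add (h1.mul_left 2)).sub (h2.mul_left 4)).sub (h2'.mul_left (2 * s * (s+1)))
  have hF : (fun k => FF k s) = fun k : ℕ => 2 * (2 * (k:ℂ) + 3) ^ (-s) + 2 * (2 * (k:ℂ) + 1) ^ (-s) - 4 * (2 * (k:ℂ) + 2) ^ (-s)
    - 2 * s * (s + 1) * (2 * (k:ℂ) + 2) ^ (-(s + 2)) := by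
    ext k; rw [show -(s+2) = -s - 2 by ring]; rfl
  rw [hF]
  refine hasSum_conv this (fun k => rfl) ?_
  · rw [show -(s+2) = -s - 2 by ring, show (1 - s) = 1 + -s by ring, Complex.cpow_add _ _ (by norm_num)]
    simp; ring

lemma FF_deriv (k : ℕ) : deriv (FF k) (-1) =
    -((2 * (2 * k + 3) * Real.log (2 * k + 3) + 2 * (2 * k + 1) * Real.log (2 * k + 1) - 4 * (2 * k + 2) * Real.log (2 * k + 2) - 1 / (k + 1) : ℝ) : ℂ) := by
  have h1 : (2 * (k:ℂ) + 1) ≠ 0 := by exact_mod_cast (by omega : 2 * k + 1 ≠ 0)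
  have h2 : (2 * (k:ℂ) + 2) ≠ 0 := by exact_mod_cast (by omega : 2 * k + 2 ≠ 0)
  have h3 : (2 * (k:ℂ) + 3) ≠ 0 := by exact_mod_cast (by omega : 2 * k + 3 ≠ 0)
  have h4 : ((k:ℂ) + 1) ≠ 0 := by exact_mod_cast (by omega : k + 1 ≠ 0)
  have e (c : ℂ) (hc : c ≠ 0) : HasDerivAt (fun s : ℂ => c ^ (-s)) (- (c * Complex.log c)) (-1) := by
    have := (hasDerivAt_neg (-1:ℂ)).const_cpow (c := c) (Or.inl hc)
    simpa using this
  have e' (c : ℂ) (hc : c ≠ 0) : HasDerivAt (fun s : ℂ => c ^ (-s - 2)) (- (c⁻¹ * Complex.log c)) (-1) := by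
    have := ((hasDerivAt_neg (-1:ℂ)).sub_const 2).const_cpow (c := c) (Or.inl hc)
    convert this using 1
    norm_num [Complex.cpow_neg_one]
  have p : HasDerivAt (fun s : ℂ => 2 * s * (s + 1)) (-2) (-1) := by
    have := ((hasDerivAt_id (-1:ℂ)).const_mul 2).mul ((hasDerivAt_id (-1:ℂ)).add_const 1)
    refine this.congr_deriv ?_
    norm_num
  have := ((((e _ h3).const_mul 2).add ((e _ h1).const_mul 2)).sub ((e _ h2).const_mul 4)).sub (p.mul (e' _ h2))
  have h := this.deriv
  have hF : FF k = (((fun s : ℂ => 2 * (2 * (k:ℂ) + 3) ^ (-s)) + fun s : ℂ => 2 * (2 * (k:ℂ) + 1) ^ (-s)) - fun s : ℂ => 4 * (2 * (k:ℂ) + 2) ^ (-s)) - ((fun s : ℂ => 2 * s * (s + 1)) * fun s : ℂ => (2 * (k:ℂ) + 2) ^ (-s - 2)) := by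
    ext s; simp [FF]
  rw [hF]
  refine h.trans ?_
  push_cast
  rw [Complex.ofReal_log (by positivity), Complex.ofReal_log (by positivity), Complex.ofReal_log (by positivity)]
  push_cast
  rw [show (- -1 - 2 : ℂ) = -1 by norm_num, Complex.cpow_neg_one]
  field_simp
  ring

open Filter Topology ZetaAsymptotics in
lemma sum_eq : HasSum (fun k : ℕ => ((2 * (2 * k + 3) * Real.log (2 * k + 3) + 2 * (2 * k + 1) * Real.log (2 * k + 1) - 4 * (2 * k + 2) * Real.log (2 * k + 2) - 1 / (k + 1) : ℝ) : ℂ))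
    (12 * deriv riemannZeta (-1) + 1 - Real.eulerMascheroniConstant + 7 / 3 * Real.log 2) := by
  set U := Metric.ball (2:ℂ) (7/2) with hU
  have hUo : IsOpen U := Metric.isOpen_ball
  have hm1 : (-1:ℂ) ∈ U := by rw [hU, Metric.mem_ball, dist_eq_norm]; norm_num
  have h2m : (2:ℂ) ∈ U := Metric.mem_ball_self (by norm_num)
  have hu : Summable (fun k : ℕ => 2 * (6 * 7 * 8 * 2 * 2 ^ (9:ℝ)) * (1 / ((k:ℝ) + 1) ^ (3/2:ℝ))) := by
    apply Summable.mul_left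
    have := (summable_nat_add_iff 1).2 (Real.summable_one_div_nat_rpow.2 (by norm_num : (1:ℝ) < 3/2))
    simpa using this
  have hd := Complex.differentiableOn_tsum_of_summable_norm hu (fun i => (FF_diff i).differentiableOn) hUo FF_bound
  have hs := Complex.hasSum_deriv_of_summable_norm hu (fun i => (FF_diff i).differentiableOn) hUo FF_bound hm1
  set H : ℂ → ℂ := fun w => ∑' i, FF i w with hH
  have c1 : Differentiable ℂ (fun s : ℂ => (2:ℂ) ^ (1 - s)) := fun s =>
    DifferentiableAt.const_cpow (by fun_prop) (Or.inl (by norm_num))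
  have c2 : Differentiable ℂ (fun s : ℂ => (2:ℂ) ^ (-s - 2)) := fun s =>
    DifferentiableAt.const_cpow (by fun_prop) (Or.inl (by norm_num))
  let Q : ℂ → ℂ := fun s => 4 * (1 - 2 ^ (1 - s)) * riemannZeta₁ s - 2 * (s - 1)
     - 2 * s * (s - 1) * (2 ^ (-s - 2) * riemannZeta₁ (s + 2))
  have hQ : Differentiable ℂ Q := by
    have : Differentiable ℂ (fun s => riemannZeta₁ (s + 2)) := differentiable_riemannZeta₁.comp (by fun_prop)
    have h := differentiable_riemannZeta₁
    fun_prop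
  have hP : DifferentiableOn ℂ (fun s => (s - 1) * H s) U := by
    apply DifferentiableOn.mul (by fun_prop) hd
  have z1 (s : ℂ) (h : s ≠ 1) : riemannZeta₁ s = (s - 1) * riemannZeta s := by
    rw [riemannZeta_eq_inv_sub_mul h]
    field_simp [sub_ne_zero.2 h]
  have heq : Set.EqOn (fun s => (s - 1) * H s) Q U := by
    apply AnalyticOnNhd.eqOn_of_preconnected_of_eventuallyEq (hP.analyticOnNhd hUo)
      (hQ.differentiableOn.analyticOnNhd hUo) (convex_ball _ _).isPreconnected h2m
    have : ∀ᶠ s : ℂ in 𝓝 2, 1 < s.re :=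
      (isOpen_lt continuous_const Complex.continuous_re).mem_nhds (by simp)
    filter_upwards [this] with s hs
    have e1 : s ≠ 1 := by rintro rfl; simp at hs
    have e2 : s + 2 ≠ 1 := by
      intro h
      have := congrArg Complex.re h
      simp at this; linarith
    simp only [hH, (FF_sum s hs).tsum_eq, Q, z1 _ e1, z1 _ e2]
    ring
  have hHd : HasDerivAt H (-(12 * deriv riemannZeta (-1) + 1 - Real.eulerMascheroniConstant + 7 / 3 * Real.log 2)) (-1) := by
    have d1 : HasDerivAt (fun s : ℂ => (2:ℂ) ^ (1 - s)) (-(4 * Real.log 2)) (-1) := by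
      have := ((hasDerivAt_id (-1:ℂ)).const_sub 1).const_cpow (c := 2) (Or.inl (by norm_num))
      refine this.congr_deriv ?_
      rw [Complex.ofReal_log (by norm_num)]
      norm_num
    have d2 : HasDerivAt (fun s : ℂ => (2:ℂ) ^ (-s - 2)) (-(1 / 2 * Real.log 2)) (-1) := by
      have := ((hasDerivAt_neg (-1:ℂ)).sub_const 2).const_cpow (c := 2) (Or.inl (by norm_num))
      refine this.congr_deriv ?_
      rw [Complex.ofReal_log (by norm_num)]
      norm_num [Complex.cpow_neg_one]
    have d3 : HasDerivAt riemannZeta (deriv riemannZeta (-1)) (-1) :=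
      (differentiableAt_riemannZeta (by norm_num)).hasDerivAt
    have d4 : HasDerivAt (fun s => riemannZeta₁ (s + 2)) (Real.eulerMascheroniConstant : ℂ) (-1) := by
      have : HasDerivAt riemannZeta₁ (Real.eulerMascheroniConstant : ℂ) (-1 + 2) := by
        rw [show (-1 + 2 : ℂ) = 1 by norm_num, ← deriv_riemannZeta₁_one]
        exact (differentiable_riemannZeta₁ 1).hasDerivAt
      exact this.comp_add_const (-1) 2
    have d5 : HasDerivAt (fun s : ℂ => 2 * s) 2 (-1) := by
      simpa using (hasDerivAt_id (-1:ℂ)).const_mul 2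
    have dd := ((((d1.const_sub 1).const_mul 4).mul d3).sub_const 2).sub (d5.mul (d2.mul d4))
    have hz : riemannZeta (-1) = -1/12 := by
      have := riemannZeta_neg_nat_eq_bernoulli 1
      norm_num [bernoulli_two] at this
      rw [this]; norm_num
    have hval : HasDerivAt (fun s : ℂ => 4 * (1 - 2 ^ (1 - s)) * riemannZeta s - 2
      - 2 * s * (2 ^ (-s - 2) * riemannZeta₁ (s + 2))) (-(12 * deriv riemannZeta (-1) + 1 - Real.eulerMascheroniConstant + 7 / 3 * Real.log 2)) (-1) := by
      refine dd.congr_deriv ?_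
      rw [hz]
      norm_num [Complex.cpow_neg_one]
      ring
    apply hval.congr_of_eventuallyEq
    have hne : ∀ᶠ s : ℂ in 𝓝 (-1), s ≠ 1 := isOpen_ne.mem_nhds (by norm_num)
    filter_upwards [hUo.mem_nhds hm1, hne] with s hs h1
    have := heq hs
    simp only [Q, z1 _ h1] at this
    apply mul_left_cancel₀ (sub_ne_zero.2 h1)
    rw [this]; ring
  rw [hHd.deriv] at hs
  simp only [FF_deriv] at hs
  simpa only [neg_neg] using hs.neg

lemma my_inner_sum (k : ℕ) : HasSum (fun n : ℕ => 1 / ((k:ℝ) + 1) ^ (2 * n + 3) / ((2 * n + 3) * (n + 2) * 4 ^ (n + 1)))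
    (2 * (2 * k + 3) * Real.log (2 * k + 3) + 2 * (2 * k + 1) * Real.log (2 * k + 1) - 4 * (2 * k + 2) * Real.log (2 * k + 2) - 1 / (k + 1)) := by
  have hk : (0:ℝ) < 2 * k + 2 := by positivity
  set x : ℝ := 1 / (2 * k + 2) with hx
  have hx0 : 0 < x := by positivity
  have hx1 : x ≤ 1/2 := by
    rw [hx]; apply one_div_le_one_div_of_le <;> norm_num
  have a1 : |x| < 1 := by rw [abs_of_pos hx0]; linarith
  have a2 : |x^2| < 1 := by rw [abs_of_pos (by positivity)]; nlinarith
  have s1 := (hasSum_nat_add_iff' 1).2 (Real.hasSum_log_sub_log_of_abs_lt_one a1)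
  have s2 := (hasSum_nat_add_iff' 1).2 (Real.hasSum_pow_div_log_of_abs_lt_one a2)
  have s3 := (s1.mul_left 2).sub (s2.mul_left (2 / x))
  refine hasSum_conv s3 ?_ ?_
  · intro n
    push_cast
    have e1 : 1 / ((k:ℝ) + 1) ^ (2 * n + 3) = 2 * 4 ^ (n+1) * x ^ (2 * n + 3) := by
      have : ((k:ℝ) + 1) = 1 / (2 * x) := by rw [hx]; field_simp
      rw [this, one_div_pow, one_div_one_div, mul_pow, show (4:ℝ) = 2 ^ 2 by norm_num, ← pow_mul]
      ring
    rw [e1]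
    have : (2 * (n:ℝ) + 3) ≠ 0 := by positivity
    have : ((n:ℝ) + 2) ≠ 0 := by positivity
    have : (2 * ((n:ℝ) + 1) + 1) ≠ 0 := by positivity
    have : ((n:ℝ) + 1 + 1) ≠ 0 := by positivity
    have e3 : (x ^ 2) ^ (n + 1 + 1) = x ^ (2 * n + 3) * x := by ring
    have e4 : x ^ (2 * (n + 1) + 1) = x ^ (2 * n + 3) := by ring
    rw [e3, e4]
    field_simp
    ring
  · have l1 : Real.log (1 + x) = Real.log (2 * k + 3) - Real.log (2 * k + 2) := by
      rw [← Real.log_div (by positivity) hk.ne']; congr 1; rw [hx]; field_simp; ring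
    have l2 : Real.log (1 - x) = Real.log (2 * k + 1) - Real.log (2 * k + 2) := by
      rw [← Real.log_div (by positivity) hk.ne']; congr 1; rw [hx]; field_simp; ring
    have l3 : Real.log (1 - x ^ 2) = Real.log (1 + x) + Real.log (1 - x) := by
      rw [← Real.log_mul (by linarith) (by linarith)]; congr 1; ring
    rw [l3, l1, l2]
    simp only [Finset.range_one, Finset.sum_singleton]
    rw [hx]
    have : (k:ℝ) + 1 ≠ 0 := by positivity
    norm_num
    field_simp
    ring

theorem stmt18 (A : ℝ)
    (hA : (Real.log A : ℂ) = 1 / 12 - deriv riemannZeta (-1)) :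
    ∑' n : ℕ, riemannZeta (2 * (n + 1) + 1) / ((2 * n + 3) * (n + 2) * 4 ^ (n + 1)) =
      ((-12 * Real.log A + 2 - Real.eulerMascheroniConstant +
        (7 / 3) * Real.log 2 : ℝ) : ℂ) := by
  let a : ℕ → ℕ → ℂ := fun n k => ((1 / ((k:ℝ) + 1) ^ (2 * n + 3) / ((2 * n + 3) * (n + 2) * 4 ^ (n + 1)) : ℝ) : ℂ)
  have hz (n : ℕ) : riemannZeta (2 * (n + 1) + 1) / ((2 * n + 3) * (n + 2) * 4 ^ (n + 1)) = ∑' k, a n k := by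
    rw [zeta_eq_tsum_one_div_nat_add_one_cpow (by norm_num; positivity), ← tsum_div_const]
    congr 1; ext k
    simp only [a]
    push_cast
    rw [show (2 * ((n:ℂ) + 1) + 1) = ((2 * n + 3 : ℕ) : ℂ) by push_cast; ring, Complex.cpow_natCast]
  have hsm : Summable (Function.uncurry a) := by
    have g1 : Summable (fun n : ℕ => (1/4:ℝ)^n) := summable_geometric_of_lt_one (by norm_num) (by norm_num)
    have g2 : Summable (fun k : ℕ => 1 / ((k:ℝ) + 1) ^ 2) := by
      have := (summable_nat_add_iff 1).2 (Real.summable_one_div_nat_pow.2 (by norm_num : 1 < 2))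
      simpa using this
    refine Summable.of_norm_bounded (g1.mul_of_nonneg g2 (fun n => by positivity) (fun n => by positivity)) ?_
    rintro ⟨n, k⟩
    simp only [Function.uncurry, a, Complex.norm_real, Real.norm_eq_abs]
    rw [abs_of_nonneg (by positivity), div_eq_mul_one_div]
    have hk1 : (1:ℝ) ≤ (k:ℝ) + 1 := by linarith [(Nat.cast_nonneg k : (0:ℝ) ≤ k)]
    rw [mul_comm ((1/4:ℝ)^n)]
    refine mul_le_mul ?_ ?_ (by positivity) (by positivity)
    · apply one_div_le_one_div_of_le (by positivity)
      exact pow_le_pow_right₀ hk1 (by omega)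
    · rw [one_div_pow]
      have hn : (0:ℝ) ≤ n := Nat.cast_nonneg n
      apply one_div_le_one_div_of_le (by positivity)
      rw [pow_succ]
      have : (0:ℝ) < 4 ^ n := by positivity
      nlinarith [mul_nonneg hn this.le, mul_nonneg (mul_nonneg hn hn) this.le]
  simp_rw [hz]
  rw [← hsm.tsum_comm]
  have hk (k : ℕ) := (Complex.hasSum_ofReal.2 (my_inner_sum k)).tsum_eq
  simp only [a]
  simp_rw [hk]
  rw [sum_eq.tsum_eq]
  push_cast
  rw [hA]; ring
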